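/- Let N ≥ 2, s ∈ (0,1), and let Ω ⊂ ℝ^N be a bounded Lipschitz domain. Let u ∈ H^s_{Ω,0} and let φ : ℝ^N → ℝ be continuous with compact support contained in Ω^c (so φ = 0 on cl(Ω)). Then φ ∈ H^s_{Ω,0}, the function (x,y) ↦ (u(x)−u(y))φ(x)/|x−y|^{N+2s} is integrable on Ω^c × Ω, and c_{N,s} ∬_{ℝ^{2N}\(Ω^c×Ω^c)} (u(x)−u(y))(φ(x)−φ(y))/|x−y|^{N+2s} dx dy = 2 ∫_{Ω^c} (𝒩_s u)(x) φ(x) dx. -/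

import Mathlib

open MeasureTheory Filter Topology Bornology Set
open scoped ENNReal NNReal

noncomputable section

namespace FracNeumann

abbrev Euc (N : ℕ) : Type := EuclideanSpace ℝ (Fin N)

/-- The kernel weight `|x - y| ^ (N + 2s)`. -/
def kern (N : ℕ) (s : ℝ) (x y : Euc N) : ℝ := ‖x - y‖ ^ ((N : ℝ) + 2 * s)

/-- The region `ℝ^{2N} \ (Ω^c × Ω^c)`, where `Ω^c := ℝ^N \ closure Ω`. -/
def reg (N : ℕ) (Ω : Set (Euc N)) : Set (Euc N × Euc N) :=
  {q | q.1 ∈ closure Ω ∨ q.2 ∈ closure Ω}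

/-- The squared seminorm `[u]_{H^s_{Ω,0}}²`, as an extended real number. -/
def semiSq (N : ℕ) (s : ℝ) (Ω : Set (Euc N)) (u : Euc N → ℝ) : ℝ≥0∞ :=
  ∫⁻ q in reg N Ω, ENNReal.ofReal ((u q.1 - u q.2) ^ 2 / kern N s q.1 q.2)

/-- `∫_Ω u²`, as an extended real number. -/
def l2sq (N : ℕ) (Ω : Set (Euc N)) (u : Euc N → ℝ) : ℝ≥0∞ :=
  ∫⁻ x in Ω, ENNReal.ofReal ((u x) ^ 2)

/-- Membership in `H^s_{Ω,0}`. -/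
def memHs (N : ℕ) (s : ℝ) (Ω : Set (Euc N)) (u : Euc N → ℝ) : Prop :=
  Measurable u ∧ l2sq N Ω u < ⊤ ∧ semiSq N s Ω u < ⊤

/-- The squared Gagliardo seminorm `[u]_{H^s(Ω)}²`. -/
def semiSqOn (N : ℕ) (s : ℝ) (Ω : Set (Euc N)) (u : Euc N → ℝ) : ℝ≥0∞ :=
  ∫⁻ q in Ω ×ˢ Ω, ENNReal.ofReal ((u q.1 - u q.2) ^ 2 / kern N s q.1 q.2)

/-- Membership in `H^s(Ω)` (for functions defined on all of `ℝ^N`). -/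
def memHsOn (N : ℕ) (s : ℝ) (Ω : Set (Euc N)) (u : Euc N → ℝ) : Prop :=
  Measurable u ∧ l2sq N Ω u < ⊤ ∧ semiSqOn N s Ω u < ⊤

/-- The normalizing constant `c_{N,s}` of the fractional Laplacian. -/
def cNs (N : ℕ) (s : ℝ) : ℝ :=
  (4 : ℝ) ^ s * s * Real.Gamma ((N : ℝ) / 2 + s) /
    (Real.pi ^ ((N : ℝ) / 2) * Real.Gamma (1 - s))

/-- The nonlocal Neumann derivative `𝒩_s u`. -/
def Nneu (N : ℕ) (s : ℝ) (Ω : Set (Euc N)) (u : Euc N → ℝ) (x : Euc N) : ℝ :=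
  cNs N s * ∫ y in Ω, (u x - u y) / kern N s x y

/-- Membership in `H̃^s_{Ω,0}`: members of `H^s_{Ω,0}` with `𝒩_s u = 0` a.e. in `Ω^c`. -/
def memHsTilde (N : ℕ) (s : ℝ) (Ω : Set (Euc N)) (u : Euc N → ℝ) : Prop :=
  memHs N s Ω u ∧ ∀ᵐ x ∂(volume.restrict (closure Ω)ᶜ), Nneu N s Ω u x = 0

/-- The first nontrivial Neumann eigenvalue `μ₁^{(s)}(Ω)`. -/
def mu1 (N : ℕ) (s : ℝ) (Ω : Set (Euc N)) : ℝ :=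
  sInf {t : ℝ | ∃ u : Euc N → ℝ, memHs N s Ω u ∧ (∫ x in Ω, (u x) ^ 2) = 1 ∧
    (∫ x in Ω, u x) = 0 ∧ t = cNs N s / 2 * (semiSq N s Ω u).toReal}

/-- The bilinear form (without the constant). -/
def bform (N : ℕ) (s : ℝ) (Ω : Set (Euc N)) (u v : Euc N → ℝ) : ℝ :=
  ∫ q in reg N Ω, (u q.1 - u q.2) * (v q.1 - v q.2) / kern N s q.1 q.2

/-- First nontrivial eigenfunction: weak solution associated to `μ₁^{(s)}(Ω)`. -/
def IsFirstEigen (N : ℕ) (s : ℝ) (Ω : Set (Euc N)) (u : Euc N → ℝ) : Prop :=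
  memHs N s Ω u ∧ ¬ (u =ᵐ[volume.restrict Ω] 0) ∧ (∫ x in Ω, u x) = 0 ∧
    ∀ v : Euc N → ℝ, memHs N s Ω v →
      cNs N s / 2 * bform N s Ω u v = mu1 N s Ω * ∫ x in Ω, u x * v x

/-- Reflection `σ_e(x) = x - 2(x·e)e` across the hyperplane `{x·e = 0}`. -/
def reflect (N : ℕ) (e x : Euc N) : Euc N := x - (2 * (inner ℝ x e : ℝ)) • e

/-- The polarization `P_e u` with respect to the hyperplane `{x·e = 0}`. -/
def polarize (N : ℕ) (e : Euc N) (u : Euc N → ℝ) (x : Euc N) : ℝ :=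
  if 0 ≤ (inner ℝ x e : ℝ) then min (u x) (u (reflect N e x))
  else max (u x) (u (reflect N e x))

/-- Foliated Schwarz symmetry with respect to `p`. -/
def FoliatedSchwarz (N : ℕ) (p : Euc N) (u : Euc N → ℝ) : Prop :=
  ∃ uh : ℝ → ℝ → ℝ, (∀ r : ℝ, AntitoneOn (uh r) (Icc 0 Real.pi)) ∧
    ∀ x : Euc N, x ≠ 0 → u x = uh ‖x‖ (Real.arccos ((inner ℝ x p : ℝ) / ‖x‖))

/-- Radial symmetry (pointwise). -/
def Radial (N : ℕ) (u : Euc N → ℝ) : Prop := ∃ f : ℝ → ℝ, ∀ x, u x = f ‖x‖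

/-- Radial symmetry (a.e.). -/
def RadialAE (N : ℕ) (u : Euc N → ℝ) : Prop :=
  ∃ f : ℝ → ℝ, ∀ᵐ x : Euc N ∂volume, u x = f ‖x‖

/-- The set `{x ∈ Ω : u x ≠ 0}` has exactly two connected components. -/
def TwoNodal (N : ℕ) (Ω : Set (Euc N)) (u : Euc N → ℝ) : Prop :=
  Nat.card (ConnectedComponents {x : Euc N // x ∈ Ω ∧ u x ≠ 0}) = 2

/-- Bounded Lipschitz domain: open, bounded, connected, and near every boundary point the set
is the region above the graph of a Lipschitz function in some direction `e`. -/
def IsLipschitzDomain (N : ℕ) (Ω : Set (Euc N)) : Prop :=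
  IsOpen Ω ∧ IsBounded Ω ∧ IsConnected Ω ∧
    ∀ x ∈ frontier Ω, ∃ e : Euc N, ‖e‖ = 1 ∧ ∃ r : ℝ, 0 < r ∧
      ∃ (L : NNReal) (f : Euc N → ℝ), LipschitzWith L f ∧
        ∀ y ∈ Metric.ball x r,
          (y ∈ Ω ↔ f (y - ((inner ℝ y e : ℝ)) • e) < (inner ℝ y e : ℝ))

/-- `g` is a weak gradient of `u` in `Ω`, square-integrable on `Ω`. -/
def IsWeakGradient (N : ℕ) (Ω : Set (Euc N)) (u : Euc N → ℝ) (g : Euc N → Euc N) : Prop :=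
  Measurable g ∧ (∫⁻ x in Ω, ENNReal.ofReal (‖g x‖ ^ 2)) < ⊤ ∧
    ∀ φ : Euc N → ℝ, ContDiff ℝ (⊤ : ℕ∞) φ → HasCompactSupport φ → tsupport φ ⊆ Ω →
      ∀ i : Fin N, (∫ x in Ω, u x * fderiv ℝ φ x (EuclideanSpace.single i 1)) =
        - ∫ x in Ω, g x i * φ x

/-- Membership in `H¹(Ω)`. -/
def memH1 (N : ℕ) (Ω : Set (Euc N)) (u : Euc N → ℝ) : Prop :=
  Measurable u ∧ l2sq N Ω u < ⊤ ∧ ∃ g, IsWeakGradient N Ω u g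

/-- `∫_Ω |∇u|²`, as an extended real number. -/
def gradSq (N : ℕ) (Ω : Set (Euc N)) (u : Euc N → ℝ) : ℝ≥0∞ :=
  ⨅ (g : Euc N → Euc N) (_ : IsWeakGradient N Ω u g), ∫⁻ x in Ω, ENNReal.ofReal (‖g x‖ ^ 2)

/-- Rayleigh quotient for the fractional Neumann problem. -/
def rayleighS (N : ℕ) (s : ℝ) (Ω : Set (Euc N)) (u : Euc N → ℝ) : ℝ≥0∞ :=
  ENNReal.ofReal (cNs N s / 2) * semiSq N s Ω u / l2sq N Ω u

/-- Rayleigh quotient for the local Neumann problem. -/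
def rayleigh1 (N : ℕ) (Ω : Set (Euc N)) (u : Euc N → ℝ) : ℝ≥0∞ :=
  gradSq N Ω u / l2sq N Ω u

/-- The min-max value `μ_n^{(s)}(Ω)` over `n`-dimensional subspaces of `H^s_{Ω,0} ∩ L²₀(Ω)`. -/
def muNs (N : ℕ) (s : ℝ) (Ω : Set (Euc N)) (n : ℕ) : ℝ≥0∞ :=
  ⨅ (A : Submodule ℝ (Euc N → ℝ)) (_ : Module.finrank ℝ A = n ∧
      (∀ u ∈ A, memHs N s Ω u ∧ (∫ x in Ω, u x) = 0) ∧
      (∀ u ∈ A, u =ᵐ[(volume : Measure (Euc N))] 0 → u = 0)),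
    ⨆ (u : Euc N → ℝ) (_ : u ∈ A ∧ u ≠ 0), rayleighS N s Ω u

/-- The min-max value over `n`-dimensional subspaces of `H̃^s_{Ω,0} ∩ L²₀(Ω)`. -/
def muNsTilde (N : ℕ) (s : ℝ) (Ω : Set (Euc N)) (n : ℕ) : ℝ≥0∞ :=
  ⨅ (A : Submodule ℝ (Euc N → ℝ)) (_ : Module.finrank ℝ A = n ∧
      (∀ u ∈ A, memHsTilde N s Ω u ∧ (∫ x in Ω, u x) = 0) ∧
      (∀ u ∈ A, u =ᵐ[(volume : Measure (Euc N))] 0 → u = 0)),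
    ⨆ (u : Euc N → ℝ) (_ : u ∈ A ∧ u ≠ 0), rayleighS N s Ω u

/-- The min-max value `μ_n^{(1)}(Ω)` over `n`-dimensional subspaces of `H¹(Ω) ∩ L²₀(Ω)`. -/
def muN1 (N : ℕ) (Ω : Set (Euc N)) (n : ℕ) : ℝ≥0∞ :=
  ⨅ (A : Submodule ℝ (Euc N → ℝ)) (_ : Module.finrank ℝ A = n ∧
      (∀ u ∈ A, memH1 N Ω u ∧ (∫ x in Ω, u x) = 0) ∧
      (∀ u ∈ A, u =ᵐ[volume.restrict Ω] 0 → u = 0)),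
    ⨆ (u : Euc N → ℝ) (_ : u ∈ A ∧ u ≠ 0), rayleigh1 N Ω u

/-- `μ_n^{(s)}(Ω)` including `μ₀^{(s)}(Ω) := 0`. -/
def muNsFull (N : ℕ) (s : ℝ) (Ω : Set (Euc N)) (n : ℕ) : ℝ≥0∞ :=
  if n = 0 then 0 else muNs N s Ω n

/-- `μ_n^{(1)}(Ω)` including `μ₀^{(1)}(Ω) := 0`. -/
def muN1Full (N : ℕ) (Ω : Set (Euc N)) (n : ℕ) : ℝ≥0∞ :=
  if n = 0 then 0 else muN1 N Ω n

/-- The squared `H^s_{Ω,0}`-seminorm of the `s`-minimal extension of `u`: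
the minimal value of `[v]²` over `v ∈ H^s_{Ω,0}` with `v = u` a.e. in `Ω`. -/
def minExtSemiSq (N : ℕ) (s : ℝ) (Ω : Set (Euc N)) (u : Euc N → ℝ) : ℝ≥0∞ :=
  ⨅ (v : Euc N → ℝ) (_ : memHs N s Ω v ∧ v =ᵐ[volume.restrict Ω] u), semiSq N s Ω v

/-- `ω_{N-1}`: volume of the unit ball of `ℝ^{N-1}`. -/
def omegaPrev (N : ℕ) : ℝ := (volume (Metric.ball (0 : Euc (N - 1)) 1)).toReal

/-- Membership in `L²₀(Ω)`. -/
def memL20 (N : ℕ) (Ω : Set (Euc N)) (u : Euc N → ℝ) : Prop :=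
  Measurable u ∧ l2sq N Ω u < ⊤ ∧ (∫ x in Ω, u x) = 0

/-- The functional `F_s` (value `+∞` outside `H^s(Ω)`). -/
def Fs (N : ℕ) (s : ℝ) (Ω : Set (Euc N)) (u : Euc N → ℝ) : ℝ≥0∞ :=
  ENNReal.ofReal (1 - s) * minExtSemiSq N s Ω u

/-- The functional `F₁` (value `+∞` outside `H¹(Ω)`). -/
def F1 (N : ℕ) (Ω : Set (Euc N)) (u : Euc N → ℝ) : ℝ≥0∞ :=
  ENNReal.ofReal (omegaPrev N / (2 * N)) * gradSq N Ω u

end FracNeumann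
namespace FracNeumann

/-!
Since `φ` vanishes on `closure Ω`, the integrand of the bilinear form is zero on
`closure Ω × closure Ω`, and by symmetry the two remaining parts of the region contribute equally,
so `bform u φ` is twice the integral of `(u x - u y) φ x / |x - y| ^ (N + 2s)` over
`Ω^c × closure Ω`. A Lipschitz graph is null, being one of uncountably many disjoint translates of
itself, so `closure Ω` may be replaced by `Ω`, and Fubini's theorem turns the inner integral into
the nonlocal Neumann derivative. The integrals converge because `φ` has finite energy: it is
square-integrable and supported at positive distance from `Ω`, and `z ↦ |z| ^ (-(N + 2s))` is
integrable away from the origin.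
-/

section General

/-- Translating along `e` makes the level sets of `h` congruent, while only countably many of them
can have positive measure. -/
lemma measure_zero_set_eq_zero_of_add_smul {E : Type*} [AddCommGroup E] [Module ℝ E]
    [MeasurableSpace E] [MeasurableAdd E] {μ : Measure E} [SFinite μ] [μ.IsAddRightInvariant]
    {h : E → ℝ} (hh : Measurable h) {e : E} (he : ∀ y (t : ℝ), h (y + t • e) = h y + t) :
    μ {y | h y = 0} = 0 := by
  have measure_level (t : ℝ) : μ {y | h y = t} = μ {y | h y = 0} := by
    rw [← measure_preimage_add_right μ ((-t) • e) {y | h y = 0}]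
    simp only [preimage_ofPred_eq, he, add_neg_eq_zero]
  by_contra hne
  have hcountable := Measure.countable_meas_level_set_pos (μ := μ) hh
  simp only [measure_level, pos_iff_ne_zero.2 hne, ofPred_true] at hcountable
  exact Cardinal.not_countable_real hcountable

lemma measure_graph_eq_zero {E : Type*} [NormedAddCommGroup E] [InnerProductSpace ℝ E]
    [MeasurableSpace E] [BorelSpace E] {μ : Measure E} [SFinite μ] [μ.IsAddRightInvariant]
    {e : E} (he : ‖e‖ = 1) {f : E → ℝ} (hf : Measurable f) :
    μ {y | f (y - inner ℝ y e • e) = inner ℝ y e} = 0 := by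
  have hinner (y : E) (t : ℝ) : inner ℝ (y + t • e) e = inner ℝ y e + t := by
    rw [inner_add_left, real_inner_smul_left, real_inner_self_eq_norm_sq, he]
    ring
  have hproj (y : E) (t : ℝ) :
      y + t • e - (inner ℝ y e + t) • e = y - inner ℝ y e • e := by module
  have hnull := measure_zero_set_eq_zero_of_add_smul (μ := μ)
    (h := fun y ↦ inner ℝ y e - f (y - inner ℝ y e • e)) (e := e)
    (Measurable.sub (by fun_prop) (hf.comp (Continuous.measurable (by fun_prop))))
    fun y t ↦ by rw [hinner, hproj]; ring
  simpa only [sub_eq_zero, eq_comm] using hnull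

lemma lintegral_compl_ball_norm_rpow_neg_lt_top {E : Type*} [NormedAddCommGroup E]
    [NormedSpace ℝ E] [FiniteDimensional ℝ E] [MeasurableSpace E] [BorelSpace E] {μ : Measure E}
    [μ.IsAddHaarMeasure] {r δ : ℝ} (hr : Module.finrank ℝ E < r) (hδ : 0 < δ) :
    ∫⁻ z in (Metric.ball (0 : E) δ)ᶜ, ENNReal.ofReal (‖z‖ ^ (-r)) ∂μ < ⊤ := by
  have hr₀ : 0 ≤ r := (Nat.cast_nonneg _).trans hr.le
  have rpow_le (z : E) (hz : z ∈ (Metric.ball (0 : E) δ)ᶜ) : ENNReal.ofReal (‖z‖ ^ (-r)) ≤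
      ENNReal.ofReal ((1 + δ⁻¹) ^ r) * ENNReal.ofReal ((1 + ‖z‖) ^ (-r)) := by
    have hδz : δ ≤ ‖z‖ := by simpa using hz
    have hz₀ : 0 < ‖z‖ := hδ.trans_le hδz
    have hle : 1 + ‖z‖ ≤ (1 + δ⁻¹) * ‖z‖ := by
      have : 1 ≤ δ⁻¹ * ‖z‖ := by rwa [le_inv_mul_iff₀ hδ, mul_one]
      linarith
    rw [← ENNReal.ofReal_mul (by positivity)]
    refine ENNReal.ofReal_le_ofReal ?_
    rw [Real.rpow_neg hz₀.le, Real.rpow_neg (by positivity), ← div_eq_mul_inv,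
      inv_le_comm₀ (by positivity) (by positivity), inv_div, div_le_iff₀ (by positivity),
      ← Real.mul_rpow (by positivity) (by positivity), mul_comm ‖z‖]
    exact Real.rpow_le_rpow (by positivity) hle hr₀
  calc ∫⁻ z in (Metric.ball (0 : E) δ)ᶜ, ENNReal.ofReal (‖z‖ ^ (-r)) ∂μ
      ≤ ∫⁻ z in (Metric.ball (0 : E) δ)ᶜ,
          ENNReal.ofReal ((1 + δ⁻¹) ^ r) * ENNReal.ofReal ((1 + ‖z‖) ^ (-r)) ∂μ :=
        setLIntegral_mono (by fun_prop) rpow_le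
    _ ≤ ∫⁻ z, ENNReal.ofReal ((1 + δ⁻¹) ^ r) * ENNReal.ofReal ((1 + ‖z‖) ^ (-r)) ∂μ :=
        setLIntegral_le_lintegral _ _
    _ = ENNReal.ofReal ((1 + δ⁻¹) ^ r) * ∫⁻ z, ENNReal.ofReal ((1 + ‖z‖) ^ (-r)) ∂μ :=
        lintegral_const_mul _ (by fun_prop)
    _ < ⊤ := ENNReal.mul_lt_top ENNReal.ofReal_lt_top (finite_integral_one_add_norm hr)

lemma setIntegral_fst_mem_or_snd_mem_eq_two_mul {α : Type*} [MeasurableSpace α] {μ : Measure α}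
    [SFinite μ] {A : Set α} (hA : MeasurableSet A) {G : α × α → ℝ}
    (hG : IntegrableOn G {q | q.1 ∈ A ∨ q.2 ∈ A} (μ.prod μ)) (hsymm : ∀ q, G q.swap = G q)
    (hzero : ∀ q ∈ A ×ˢ A, G q = 0) :
    ∫ q in {q | q.1 ∈ A ∨ q.2 ∈ A}, G q ∂μ.prod μ = 2 * ∫ q in Aᶜ ×ˢ A, G q ∂μ.prod μ := by
  have hleft : Aᶜ ×ˢ A ⊆ {q | q.1 ∈ A ∨ q.2 ∈ A} := fun _ hq ↦ Or.inr hq.2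
  have hright : A ×ˢ Aᶜ ⊆ {q | q.1 ∈ A ∨ q.2 ∈ A} := fun _ hq ↦ Or.inl hq.1
  have hdisjoint : Disjoint (Aᶜ ×ˢ A) (A ×ˢ Aᶜ) :=
    disjoint_left.2 fun _ hq hq' ↦ hq.1 hq'.1
  have hswap : ∫ q in A ×ˢ Aᶜ, G q ∂μ.prod μ = ∫ q in Aᶜ ×ˢ A, G q ∂μ.prod μ := by
    simpa only [hsymm] using setIntegral_prod_swap (μ := μ) (ν := μ) Aᶜ A G
  have hoff (q : α × α) (hq : q ∈ {q | q.1 ∈ A ∨ q.2 ∈ A} \ (Aᶜ ×ˢ A ∪ A ×ˢ Aᶜ)) :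
      G q = 0 := by
    refine hzero q ?_
    simp only [Set.mem_sdiff, mem_ofPred_eq, mem_union, mem_prod, mem_compl_iff] at hq ⊢
    tauto
  calc ∫ q in {q | q.1 ∈ A ∨ q.2 ∈ A}, G q ∂μ.prod μ
      = ∫ q in Aᶜ ×ˢ A ∪ A ×ˢ Aᶜ, G q ∂μ.prod μ :=
        setIntegral_eq_of_subset_of_forall_sdiff_eq_zero
          ((measurable_fst hA).union (measurable_snd hA)) (union_subset hleft hright) hoff
    _ = ∫ q in Aᶜ ×ˢ A, G q ∂μ.prod μ + ∫ q in A ×ˢ Aᶜ, G q ∂μ.prod μ :=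
        setIntegral_union hdisjoint (hA.prod hA.compl) (hG.mono_set hleft) (hG.mono_set hright)
    _ = 2 * ∫ q in Aᶜ ×ˢ A, G q ∂μ.prod μ := by rw [hswap, two_mul]

lemma setLIntegral_fst_mem_or_snd_mem_le_two_mul {α : Type*} [MeasurableSpace α] {μ : Measure α}
    [SFinite μ] {A : Set α} {g : α × α → ℝ≥0∞} (hg : Measurable g)
    (hsymm : ∀ q, g q.swap = g q) :
    ∫⁻ q in {q | q.1 ∈ A ∨ q.2 ∈ A}, g q ∂μ.prod μ ≤ 2 * ∫⁻ x, ∫⁻ y in A, g (x, y) ∂μ ∂μ := by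
  have hunion : {q : α × α | q.1 ∈ A ∨ q.2 ∈ A} = A ×ˢ univ ∪ univ ×ˢ A := by
    ext q
    simp only [mem_ofPred_eq, mem_union, mem_prod, mem_univ, and_true, true_and]
  have hright : ∫⁻ q in univ ×ˢ A, g q ∂μ.prod μ = ∫⁻ x, ∫⁻ y in A, g (x, y) ∂μ ∂μ := by
    rw [← Measure.prod_restrict, Measure.restrict_univ, lintegral_prod _ hg.aemeasurable]
  have hleft : ∫⁻ q in A ×ˢ univ, g q ∂μ.prod μ = ∫⁻ q in univ ×ˢ A, g q ∂μ.prod μ := by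
    rw [← Measure.prod_restrict, ← Measure.prod_restrict, ← lintegral_prod_swap]
    simp only [hsymm]
  calc ∫⁻ q in {q | q.1 ∈ A ∨ q.2 ∈ A}, g q ∂μ.prod μ
      ≤ ∫⁻ q in A ×ˢ univ, g q ∂μ.prod μ + ∫⁻ q in univ ×ˢ A, g q ∂μ.prod μ := by
        rw [hunion]
        exact lintegral_union_le _ _ _
    _ = 2 * ∫⁻ x, ∫⁻ y in A, g (x, y) ∂μ ∂μ := by rw [hleft, hright, two_mul]

lemma exists_pos_eqOn_zero_thickening {X : Type*} [PseudoMetricSpace X] {M : Type*} [Zero M]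
    {f : X → M} {A : Set X} (hf : HasCompactSupport f) (hfA : tsupport f ⊆ (closure A)ᶜ) :
    ∃ δ > 0, EqOn f 0 (Metric.thickening δ A) := by
  obtain ⟨δ, hδ, hdisjoint⟩ := (disjoint_left.2 fun _ hx ↦ hfA hx).exists_thickenings hf
    (isClosed_closure (s := A))
  refine ⟨δ, hδ, fun x hx ↦ image_eq_zero_of_notMem_tsupport fun hx' ↦ ?_⟩
  rw [Metric.thickening_closure] at hdisjoint
  exact hdisjoint.notMem_of_mem_left (Metric.self_subset_thickening hδ _ hx') hx

end General

section Neumann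

variable {N : ℕ} {s : ℝ} {Ω : Set (Euc N)} {u v φ : Euc N → ℝ}

lemma IsLipschitzDomain.volume_frontier (hΩ : IsLipschitzDomain N Ω) :
    volume (frontier Ω) = 0 := by
  refine measure_null_of_locally_null _ fun x hx ↦ ?_
  obtain ⟨e, he, r, hr, L, f, hf, hmem_iff⟩ := hΩ.2.2.2 x hx
  set B := Metric.ball x r
  set epigraph : Set (Euc N) := {y | f (y - inner ℝ y e • e) < inner ℝ y e}
  have hlocal : Ω ∩ B = epigraph ∩ B := by
    ext y
    exact and_congr_left (hmem_iff y)
  have hsubset : frontier Ω ∩ B ⊆ {y | f (y - inner ℝ y e • e) = inner ℝ y e} := by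
    have hcont := hf.continuous
    rw [← frontier_inter_open_inter Metric.isOpen_ball, hlocal,
      frontier_inter_open_inter Metric.isOpen_ball]
    exact inter_subset_left.trans (frontier_lt_subset_eq (by fun_prop) (by fun_prop))
  exact ⟨frontier Ω ∩ B, inter_mem_nhdsWithin _ (Metric.ball_mem_nhds x hr),
    measure_mono_null hsubset (measure_graph_eq_zero he hf.continuous.measurable)⟩

lemma kern_nonneg (x y : Euc N) : 0 ≤ kern N s x y :=
  Real.rpow_nonneg (norm_nonneg _) _

lemma kern_comm (x y : Euc N) : kern N s x y = kern N s y x := by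
  rw [kern, norm_sub_rev, kern]

@[fun_prop]
lemma measurable_kern : Measurable fun q : Euc N × Euc N ↦ kern N s q.1 q.2 := by
  unfold kern
  fun_prop

lemma exists_forall_setLIntegral_inv_kern_le (hs : 0 < s) {δ : ℝ} (hδ : 0 < δ) :
    ∃ C < ⊤, ∀ (A : Set (Euc N)) (x : Euc N), x ∉ Metric.thickening δ A →
      ∫⁻ y in A, ENNReal.ofReal (kern N s x y)⁻¹ ≤ C := by
  refine ⟨∫⁻ z in (Metric.ball (0 : Euc N) δ)ᶜ, ENNReal.ofReal (‖z‖ ^ (-((N : ℝ) + 2 * s))),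
    lintegral_compl_ball_norm_rpow_neg_lt_top ?_ hδ, fun A x hx ↦ ?_⟩
  · rw [finrank_euclideanSpace_fin]
    linarith
  have hsub : A ⊆ (x - ·) ⁻¹' (Metric.ball 0 δ)ᶜ := by
    intro y hy
    simp only [Metric.mem_thickening_iff, not_exists, not_and, not_lt] at hx
    simpa [dist_eq_norm] using hx y hy
  calc ∫⁻ y in A, ENNReal.ofReal (kern N s x y)⁻¹
      ≤ ∫⁻ y in (x - ·) ⁻¹' (Metric.ball 0 δ)ᶜ, ENNReal.ofReal (kern N s x y)⁻¹ :=
        lintegral_mono_set hsub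
    _ = ∫⁻ y in (x - ·) ⁻¹' (Metric.ball 0 δ)ᶜ,
          ENNReal.ofReal (‖x - y‖ ^ (-((N : ℝ) + 2 * s))) := by
        simp only [kern, Real.rpow_neg (norm_nonneg _)]
    _ = ∫⁻ z in (Metric.ball (0 : Euc N) δ)ᶜ, ENNReal.ofReal (‖z‖ ^ (-((N : ℝ) + 2 * s))) :=
        (Measure.measurePreserving_sub_left volume x).setLIntegral_comp_preimage
          Metric.isOpen_ball.measurableSet.compl
          (f := fun z ↦ ENNReal.ofReal (‖z‖ ^ (-((N : ℝ) + 2 * s)))) (by fun_prop)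

lemma semiSq_le_two_mul_lintegral (hu : Measurable u) :
    semiSq N s Ω u ≤
      2 * ∫⁻ x, ∫⁻ y in closure Ω, ENNReal.ofReal ((u x - u y) ^ 2 / kern N s x y) :=
  setLIntegral_fst_mem_or_snd_mem_le_two_mul (by fun_prop) fun q ↦ by
    rw [Prod.fst_swap, Prod.snd_swap, kern_comm, sub_sq_comm]

lemma semiSq_lt_top_of_eqOn_zero_thickening (hs : 0 < s) (hφ : Measurable φ) (hφ₂ : MemLp φ 2)
    {δ : ℝ} (hδ : 0 < δ) (hzero : EqOn φ 0 (Metric.thickening δ Ω)) : semiSq N s Ω φ < ⊤ := by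
  obtain ⟨C, hC, kern_le⟩ := exists_forall_setLIntegral_inv_kern_le (N := N) hs hδ
  have hclosure : ∀ y ∈ closure Ω, φ y = 0 := fun y hy ↦
    hzero (Metric.closure_subset_thickening hδ Ω hy)
  have inner_le (x : Euc N) :
      ∫⁻ y in closure Ω, ENNReal.ofReal ((φ x - φ y) ^ 2 / kern N s x y) ≤
        ENNReal.ofReal (φ x ^ 2) * C := by
    calc ∫⁻ y in closure Ω, ENNReal.ofReal ((φ x - φ y) ^ 2 / kern N s x y)
        = ∫⁻ y in closure Ω, ENNReal.ofReal (φ x ^ 2) * ENNReal.ofReal (kern N s x y)⁻¹ :=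
          setLIntegral_congr_fun isClosed_closure.measurableSet fun y hy ↦ by
            rw [hclosure y hy, sub_zero, div_eq_mul_inv, ENNReal.ofReal_mul (sq_nonneg _)]
      _ = ENNReal.ofReal (φ x ^ 2) * ∫⁻ y in closure Ω, ENNReal.ofReal (kern N s x y)⁻¹ :=
          lintegral_const_mul' _ _ ENNReal.ofReal_ne_top
      _ ≤ ENNReal.ofReal (φ x ^ 2) * C := by
          by_cases hx : x ∈ Metric.thickening δ Ω
          · simp [hzero hx]
          · gcongr
            exact kern_le _ x (by rwa [Metric.thickening_closure])
  calc semiSq N s Ω φ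
      ≤ 2 * ∫⁻ x, ∫⁻ y in closure Ω, ENNReal.ofReal ((φ x - φ y) ^ 2 / kern N s x y) :=
        semiSq_le_two_mul_lintegral hφ
    _ ≤ 2 * ∫⁻ x, ENNReal.ofReal (φ x ^ 2) * C := by
        gcongr
        exact inner_le _
    _ = 2 * ((∫⁻ x, ENNReal.ofReal (φ x ^ 2)) * C) := by
        rw [lintegral_mul_const' _ _ hC.ne]
    _ < ⊤ := ENNReal.mul_lt_top ENNReal.ofNat_lt_top
        (ENNReal.mul_lt_top hφ₂.integrable_sq.lintegral_lt_top hC)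

lemma memHs_of_eqOn_zero_thickening (hs : 0 < s) (hφ : Measurable φ) (hφ₂ : MemLp φ 2)
    {δ : ℝ} (hδ : 0 < δ) (hzero : EqOn φ 0 (Metric.thickening δ Ω)) : memHs N s Ω φ :=
  ⟨hφ, (setLIntegral_le_lintegral _ _).trans_lt hφ₂.integrable_sq.lintegral_lt_top,
    semiSq_lt_top_of_eqOn_zero_thickening hs hφ hφ₂ hδ hzero⟩

lemma memHs.integrableOn_sq_sub_div_kern (hu : memHs N s Ω u) :
    IntegrableOn (fun q : Euc N × Euc N ↦ (u q.1 - u q.2) ^ 2 / kern N s q.1 q.2) (reg N Ω) := by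
  have hmeas := hu.1
  have hnonneg (q : Euc N × Euc N) : 0 ≤ (u q.1 - u q.2) ^ 2 / kern N s q.1 q.2 :=
    div_nonneg (sq_nonneg _) (kern_nonneg _ _)
  refine ⟨Measurable.aestronglyMeasurable (by fun_prop), ?_⟩
  rw [hasFiniteIntegral_iff_ofReal (Eventually.of_forall hnonneg)]
  exact hu.2.2

lemma memHs.integrableOn_sub_mul_sub_div_kern (hu : memHs N s Ω u) (hv : memHs N s Ω v) :
    IntegrableOn (fun q : Euc N × Euc N ↦ (u q.1 - u q.2) * (v q.1 - v q.2) / kern N s q.1 q.2)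
      (reg N Ω) := by
  have hmeasu := hu.1
  have hmeasv := hv.1
  refine (hu.integrableOn_sq_sub_div_kern.add hv.integrableOn_sq_sub_div_kern).mono'
    (Measurable.aestronglyMeasurable (by fun_prop)) (Eventually.of_forall fun q ↦ ?_)
  have abs_mul_le (a b : ℝ) : |a * b| ≤ a ^ 2 + b ^ 2 := by
    rw [abs_mul, ← sq_abs a, ← sq_abs b]
    nlinarith [two_mul_le_add_sq |a| |b|, mul_nonneg (abs_nonneg a) (abs_nonneg b)]
  rw [Pi.add_apply, ← add_div, norm_div, Real.norm_eq_abs, Real.norm_of_nonneg (kern_nonneg _ _)]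
  exact div_le_div_of_nonneg_right (abs_mul_le _ _) (kern_nonneg _ _)

lemma eqOn_sub_mul_sub_div_kern (hzero : EqOn φ 0 (closure Ω)) :
    EqOn (fun q : Euc N × Euc N ↦ (u q.1 - u q.2) * (φ q.1 - φ q.2) / kern N s q.1 q.2)
      (fun q ↦ (u q.1 - u q.2) * φ q.1 / kern N s q.1 q.2) ((closure Ω)ᶜ ×ˢ closure Ω) := by
  intro q hq
  simp only [hzero hq.2, Pi.zero_apply, sub_zero]

lemma integrableOn_sub_mul_div_kern (hu : memHs N s Ω u) (hφ : memHs N s Ω φ)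
    (hzero : EqOn φ 0 (closure Ω)) :
    IntegrableOn (fun q : Euc N × Euc N ↦ (u q.1 - u q.2) * φ q.1 / kern N s q.1 q.2)
      ((closure Ω)ᶜ ×ˢ closure Ω) :=
  ((hu.integrableOn_sub_mul_sub_div_kern hφ).mono_set fun _ hq ↦ Or.inr hq.2).congr_fun
    (eqOn_sub_mul_sub_div_kern hzero)
    (isClosed_closure.measurableSet.compl.prod isClosed_closure.measurableSet)

lemma bform_eq_two_mul_setIntegral (hu : memHs N s Ω u) (hφ : memHs N s Ω φ)
    (hzero : EqOn φ 0 (closure Ω)) :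
    bform N s Ω u φ = 2 * ∫ q in (closure Ω)ᶜ ×ˢ closure Ω,
      (u q.1 - u q.2) * φ q.1 / kern N s q.1 q.2 := by
  have hmeas : MeasurableSet (closure Ω) := isClosed_closure.measurableSet
  rw [← setIntegral_congr_fun (hmeas.compl.prod hmeas) (eqOn_sub_mul_sub_div_kern hzero)]
  refine setIntegral_fst_mem_or_snd_mem_eq_two_mul hmeas
    (hu.integrableOn_sub_mul_sub_div_kern hφ) (fun q ↦ ?_) fun q hq ↦ ?_
  · rw [Prod.fst_swap, Prod.snd_swap, kern_comm, ← neg_sub (u q.1), ← neg_sub (φ q.1), neg_mul_neg]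
  · simp only [hzero hq.1, hzero hq.2, Pi.zero_apply, sub_zero, mul_zero, zero_div]

lemma Nneu_mul (x : Euc N) (a : ℝ) :
    Nneu N s Ω u x * a = cNs N s * ∫ y in Ω, (u x - u y) * a / kern N s x y := by
  simp only [Nneu, mul_assoc, ← integral_mul_const, div_mul_eq_mul_div]

lemma cNs_mul_bform_eq (hΩ : volume (frontier Ω) = 0) (hu : memHs N s Ω u)
    (hφ : memHs N s Ω φ) (hzero : EqOn φ 0 (closure Ω)) :
    cNs N s * bform N s Ω u φ = 2 * ∫ x in (closure Ω)ᶜ, Nneu N s Ω u x * φ x := by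
  have hclosure : closure Ω =ᵐ[volume] Ω := closure_ae_eq_of_null_frontier hΩ
  have hfubini : ∫ q in (closure Ω)ᶜ ×ˢ closure Ω, (u q.1 - u q.2) * φ q.1 / kern N s q.1 q.2 =
      ∫ x in (closure Ω)ᶜ, ∫ y in Ω, (u x - u y) * φ x / kern N s x y := by
    rw [Measure.volume_eq_prod, setIntegral_prod _ (integrableOn_sub_mul_div_kern hu hφ hzero),
      Measure.restrict_congr_set hclosure]
  rw [bform_eq_two_mul_setIntegral hu hφ hzero, hfubini, mul_left_comm, ← integral_const_mul]
  simp only [Nneu_mul]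

theorem statement19_general (hs : 0 < s) (hΩ : volume (frontier Ω) = 0) (hu : memHs N s Ω u)
    (hφ : Measurable φ) (hφ₂ : MemLp φ 2) {δ : ℝ} (hδ : 0 < δ)
    (hzero : EqOn φ 0 (Metric.thickening δ Ω)) :
    memHs N s Ω φ ∧
    IntegrableOn (fun q : Euc N × Euc N ↦ (u q.1 - u q.2) * φ q.1 / kern N s q.1 q.2)
      ((closure Ω)ᶜ ×ˢ Ω) ∧
    cNs N s * bform N s Ω u φ = 2 * ∫ x in (closure Ω)ᶜ, Nneu N s Ω u x * φ x := by
  have hφs : memHs N s Ω φ := memHs_of_eqOn_zero_thickening hs hφ hφ₂ hδ hzero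
  have hclosure : EqOn φ 0 (closure Ω) := hzero.mono (Metric.closure_subset_thickening hδ Ω)
  exact ⟨hφs,
    (integrableOn_sub_mul_div_kern hu hφs hclosure).mono_set (prod_mono_right subset_closure),
    cNs_mul_bform_eq hΩ hu hφs hclosure⟩

end Neumann

/-- integration by parts against test functions supported in `Ω^c`, from the
proofs of Propositions 2.2 and 2.4. -/
theorem statement19 (N : ℕ) (hN : 2 ≤ N) (s : ℝ) (hs : s ∈ Set.Ioo (0 : ℝ) 1)
    (Ω : Set (Euc N)) (hΩ : IsLipschitzDomain N Ω)
    (u : Euc N → ℝ) (hu : memHs N s Ω u)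
    (φ : Euc N → ℝ) (hφc : Continuous φ) (hφs : HasCompactSupport φ)
    (hφsupp : tsupport φ ⊆ (closure Ω)ᶜ) :
    memHs N s Ω φ ∧
    MeasureTheory.IntegrableOn
      (fun q : Euc N × Euc N => (u q.1 - u q.2) * φ q.1 / kern N s q.1 q.2)
      ((closure Ω)ᶜ ×ˢ Ω) volume ∧
    cNs N s * bform N s Ω u φ = 2 * ∫ x in (closure Ω)ᶜ, Nneu N s Ω u x * φ x := by
  obtain ⟨δ, hδ, hzero⟩ := exists_pos_eqOn_zero_thickening hφs hφsupp
  exact statement19_general hs.1 hΩ.volume_frontier hu hφc.measurable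
    (hφc.memLp_of_hasCompactSupport hφs) hδ hzero

end FracNeumann
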